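/- Let G be any subgroup of SL(2,ℂ) of order 120 under which F(x,y) = x·y·(x^10 − 11x^5y^5 − y^10) is invariant (F(A·(x,y)) = F(x,y) for all A ∈ G). Then every homogeneous polynomial P ∈ ℂ[x,y] of degree 60 that is invariant under every element of G is a ℂ-linear combination of F^5 and H^3, where H(x,y) = x^20 + 228x^15y^5 + 494x^10y^10 − 228x^5y^15 + y^20; i.e., the space of degree-60 invariants is two-dimensional, spanned by F^5 and H^3. -/

import Mathlib

open MvPolynomial

/-- Substitution of the linear map given by a 2×2 matrix `A` into a two-variable
polynomial: `G(A·(x,y)) = G(ax+by, cx+dy)`. -/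
noncomputable def subst (A : Matrix (Fin 2) (Fin 2) ℂ) (G : MvPolynomial (Fin 2) ℂ) :
    MvPolynomial (Fin 2) ℂ :=
  aeval (fun i => C (A i 0) * X 0 + C (A i 1) * X 1) G

/-- The matrix of an element of \`SL(2,ℂ)\`. -/
noncomputable def mat (A : Matrix.SpecialLinearGroup (Fin 2) ℂ) : Matrix (Fin 2) (Fin 2) ℂ := A

/-- Klein's degree-12 icosahedral form `F(x,y) = x·y·(x^10 − 11x^5y^5 − y^10)`. -/
noncomputable def F : MvPolynomial (Fin 2) ℂ :=
  X 0 * X 1 * ((X 0) ^ 10 - 11 * (X 0) ^ 5 * (X 1) ^ 5 - (X 1) ^ 10)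

/-- Klein's degree-20 icosahedral form `H`. -/
noncomputable def H : MvPolynomial (Fin 2) ℂ :=
  (X 0) ^ 20 + 228 * (X 0) ^ 15 * (X 1) ^ 5 + 494 * (X 0) ^ 10 * (X 1) ^ 10
    - 228 * (X 0) ^ 5 * (X 1) ^ 15 + (X 1) ^ 20

theorem eval_subst (A : Matrix (Fin 2) (Fin 2) ℂ) (Q : MvPolynomial (Fin 2) ℂ) (x y : ℂ) :
    eval ![x, y] (subst A Q) = eval ![A 0 0 * x + A 0 1 * y, A 1 0 * x + A 1 1 * y] Q := by
  induction Q using MvPolynomial.induction_on with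
  | C c => simp [subst]
  | add p q hp hq => simp only [subst, map_add] at *; rw [hp, hq]
  | mul_X p i hp =>
    simp only [subst, map_mul] at *
    rw [hp]
    fin_cases i <;> simp

theorem subst_pow (A : Matrix (Fin 2) (Fin 2) ℂ) (Q : MvPolynomial (Fin 2) ℂ) (n : ℕ) :
    subst A (Q ^ n) = subst A Q ^ n := by
  simp [subst]

theorem subst_sub_linear (A : Matrix (Fin 2) (Fin 2) ℂ) (P Q R : MvPolynomial (Fin 2) ℂ)
    (a b : ℂ) : subst A (P - (C a * Q + C b * R)) =
      subst A P - (C a * subst A Q + C b * subst A R) := by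
  simp [subst]

/-- The chain rule for a linear substitution. -/
theorem pderiv_subst (A : Matrix (Fin 2) (Fin 2) ℂ) (Q : MvPolynomial (Fin 2) ℂ) (i : Fin 2) :
    pderiv i (subst A Q) =
      C (A 0 i) * subst A (pderiv 0 Q) + C (A 1 i) * subst A (pderiv 1 Q) := by
  induction Q using MvPolynomial.induction_on with
  | C c => simp [subst]
  | add p q hp hq => simp only [subst, map_add] at *; rw [hp, hq]; ring
  | mul_X p j hp =>
    simp only [subst, map_mul, Derivation.leibniz, smul_eq_mul, map_add] at *
    rw [hp]
    fin_cases i <;> fin_cases j <;> simp [pderiv_X] <;> ring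

/-- The Hessian determinant of a binary form. -/
noncomputable def hessian (Q : MvPolynomial (Fin 2) ℂ) : MvPolynomial (Fin 2) ℂ :=
  pderiv 0 (pderiv 0 Q) * pderiv 1 (pderiv 1 Q) - pderiv 0 (pderiv 1 Q) * pderiv 1 (pderiv 0 Q)

theorem hessian_subst (A : Matrix (Fin 2) (Fin 2) ℂ) (Q : MvPolynomial (Fin 2) ℂ) :
    hessian (subst A Q) = C (A.det ^ 2) * subst A (hessian Q) := by
  have hs : subst A (hessian Q) =
      subst A (pderiv 0 (pderiv 0 Q)) * subst A (pderiv 1 (pderiv 1 Q)) -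
        subst A (pderiv 0 (pderiv 1 Q)) * subst A (pderiv 1 (pderiv 0 Q)) := by
    simp [subst, hessian]
  rw [hs]
  simp only [hessian, pderiv_subst, map_add, pderiv_C_mul, Matrix.det_fin_two, map_pow, map_sub,
    map_mul]
  ring

theorem hessian_F : hessian F = C (-121) * H := by
  have hnum (i : Fin 2) (n : ℕ) [n.AtLeastTwo] :
      pderiv i (ofNat(n) : MvPolynomial (Fin 2) ℂ) = 0 := (pderiv i).map_natCast n
  have h121 : (C (-121) : MvPolynomial (Fin 2) ℂ) = -121 := by rw [map_neg, map_ofNat]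
  rw [hessian, h121, F, H]
  simp [Derivation.leibniz, Derivation.leibniz_pow, pderiv_X, hnum]
  ring

theorem subst_H {A : Matrix (Fin 2) (Fin 2) ℂ} (hdet : A.det = 1) (hA : subst A F = F) :
    subst A H = H := by
  have h := hessian_subst A F
  rw [hA, hdet, hessian_F] at h
  have h' : subst A (C (-121) * H) = C (-121) * subst A H := by simp [subst]
  rw [h', one_pow, C_1, one_mul] at h
  exact (mul_left_cancel₀ (by simp) h).symm

theorem eval_mul_of_isHomogeneous {Q : MvPolynomial (Fin 2) ℂ} {n : ℕ} (hQ : Q.IsHomogeneous n)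
    (c x y : ℂ) : eval ![c * x, c * y] Q = c ^ n * eval ![x, y] Q := by
  rw [eval_eq', eval_eq', Finset.mul_sum]
  refine Finset.sum_congr rfl fun d hd => ?_
  have h := hQ (mem_support_iff.mp hd)
  rw [Finsupp.weight_apply, Finsupp.sum_fintype _ _ (by simp)] at h
  simp only [Fin.sum_univ_two, Fin.prod_univ_two, Pi.one_apply, smul_eq_mul, mul_one] at h ⊢
  rw [← h]
  simp
  ring

/-- A binary form of degree `n` with more than `n` zeros of the form `(1, s)` vanishes. -/
theorem eq_zero_of_card_zeros {Q : MvPolynomial (Fin 2) ℂ} {n : ℕ} (hQ : Q.IsHomogeneous n)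
    (S : Finset ℂ) (hS : ∀ s ∈ S, eval ![1, s] Q = 0) (hcard : n < S.card) : Q = 0 := by
  let q : Polynomial ℂ := aeval ![1, Polynomial.X] Q
  have hq : ∀ s, q.eval s = eval ![1, s] Q := by
    intro s
    rw [← Polynomial.coe_evalRingHom, map_aeval]
    refine eval₂Hom_congr ?_ ?_ rfl
    · ext; simp
    · ext i; fin_cases i <;> simp
  have hq0 : q = 0 := by
    refine Polynomial.eq_zero_of_natDegree_lt_card_of_eval_eq_zero' q S
      (fun s hs => (hq s).trans (hS s hs)) (lt_of_le_of_lt ?_ hcard)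
    have := MvPolynomial.aeval_natDegree_le Q hQ.totalDegree_le
      (![1, Polynomial.X] : Fin 2 → Polynomial ℂ) (n := 1) (by
        intro i; fin_cases i <;> simp)
    simpa using this
  have hX : (X 0 * Q : MvPolynomial (Fin 2) ℂ) = 0 := by
    refine MvPolynomial.funext fun v => ?_
    by_cases hv : v 0 = 0
    · simp [hv]
    · have hvv : v = ![v 0 * 1, v 0 * (v 1 / v 0)] := by
        ext i; fin_cases i <;> simp [mul_div_cancel₀, hv]
      have : eval v Q = 0 := by
        rw [hvv, eval_mul_of_isHomogeneous hQ, ← hq, hq0]; simp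
      simp [this]
  exact (mul_eq_zero.mp hX).resolve_left (X_ne_zero 0)

theorem isHomogeneous_F : F.IsHomogeneous 12 := by
  have h11 : (11 : MvPolynomial (Fin 2) ℂ) = C 11 := (map_ofNat C 11).symm
  have hF : F = X 0 ^ 11 * X 1 ^ 1 - C 11 * (X 0 ^ 6 * X 1 ^ 6) - X 0 ^ 1 * X 1 ^ 11 := by
    rw [F, h11]; ring
  rw [hF]
  have hm (a b : ℕ) : (X 0 ^ a * X 1 ^ b : MvPolynomial (Fin 2) ℂ).IsHomogeneous (a + b) :=
    (isHomogeneous_X_pow 0 a).mul (isHomogeneous_X_pow 1 b)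
  exact ((hm 11 1).sub ((hm 6 6).C_mul 11)).sub (hm 1 11)

theorem isHomogeneous_H : H.IsHomogeneous 20 := by
  have h228 : (228 : MvPolynomial (Fin 2) ℂ) = C 228 := (map_ofNat C 228).symm
  have h494 : (494 : MvPolynomial (Fin 2) ℂ) = C 494 := (map_ofNat C 494).symm
  have hH : H = X 0 ^ 20 * X 1 ^ 0 + C 228 * (X 0 ^ 15 * X 1 ^ 5) + C 494 * (X 0 ^ 10 * X 1 ^ 10)
      - C 228 * (X 0 ^ 5 * X 1 ^ 15) + X 0 ^ 0 * X 1 ^ 20 := by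
    rw [H, h228, h494]; ring
  rw [hH]
  have hm (a b : ℕ) : (X 0 ^ a * X 1 ^ b : MvPolynomial (Fin 2) ℂ).IsHomogeneous (a + b) :=
    (isHomogeneous_X_pow 0 a).mul (isHomogeneous_X_pow 1 b)
  exact ((((hm 20 0).add ((hm 15 5).C_mul 228)).add ((hm 10 10).C_mul 494)).sub
    ((hm 5 15).C_mul 228)).add (hm 0 20)

open Matrix (SpecialLinearGroup)

/-- The Möbius action of `A` in the affine coordinate `y / x`. -/
noncomputable def moebius (t : ℂ) (A : SpecialLinearGroup (Fin 2) ℂ) : ℂ :=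
  (A 1 0 + A 1 1 * t) / (A 0 0 + A 0 1 * t)

/-- The point `(1, t)` is not mapped to infinity by `A`, and `A` fixes it projectively only if
`A = ±1`. -/
def IsGenericFor (A : SpecialLinearGroup (Fin 2) ℂ) (t : ℂ) : Prop :=
  A 0 0 + A 0 1 * t ≠ 0 ∧
    (A 1 0 + A 1 1 * t = t * (A 0 0 + A 0 1 * t) → A = 1 ∨ A = -1)

theorem eventually_eval_ne_zero {q : Polynomial ℂ} (hq : q ≠ 0) :
    ∀ᶠ t in Filter.cofinite, q.eval t ≠ 0 := by
  rw [Filter.eventually_cofinite]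
  simpa [Polynomial.IsRoot] using Polynomial.finite_setOfPred_isRoot hq

theorem eventually_isGenericFor (A : SpecialLinearGroup (Fin 2) ℂ) :
    ∀ᶠ t in Filter.cofinite, IsGenericFor A t := by
  have hdet : A 0 0 * A 1 1 - A 0 1 * A 1 0 = 1 := by
    rw [← Matrix.det_fin_two]; exact A.2
  have h1 : ∀ᶠ t in Filter.cofinite, A 0 0 + A 0 1 * t ≠ 0 := by
    have hq : Polynomial.C (A 0 0) + Polynomial.C (A 0 1) * Polynomial.X ≠ 0 := by
      intro h
      have e0 := congrArg (Polynomial.coeff · 0) h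
      have e1 := congrArg (Polynomial.coeff · 1) h
      simp [Polynomial.coeff_C] at e0 e1
      simp [e0, e1] at hdet
    simpa using eventually_eval_ne_zero hq
  have h2 : ∀ᶠ t in Filter.cofinite,
      A 1 0 + A 1 1 * t = t * (A 0 0 + A 0 1 * t) → A = 1 ∨ A = -1 := by
    by_cases hA : A = 1 ∨ A = -1
    · exact Filter.Eventually.of_forall fun _ _ => hA
    have hq : Polynomial.C (A 1 0) + Polynomial.C (A 1 1 - A 0 0) * Polynomial.X
        - Polynomial.C (A 0 1) * Polynomial.X ^ 2 ≠ 0 := by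
      intro h
      have e0 := congrArg (Polynomial.coeff · 0) h
      have e1 := congrArg (Polynomial.coeff · 1) h
      have e2 := congrArg (Polynomial.coeff · 2) h
      simp [Polynomial.coeff_C, Polynomial.coeff_X, Polynomial.coeff_X_pow, -map_sub] at e0 e1 e2
      have e1' := sub_eq_zero.mp e1
      rw [e0, e2, e1', mul_zero, sub_zero, mul_self_eq_one_iff] at hdet
      apply hA
      refine hdet.imp (fun h => ?_) (fun h => ?_) <;> ext i j <;> fin_cases i <;> fin_cases j <;>
        simp [e0, e2, e1', h]
    filter_upwards [eventually_eval_ne_zero hq] with t ht h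
    refine absurd ?_ ht
    simp
    linear_combination h
  exact h1.and h2

theorem eval_eq_moebius {Q : MvPolynomial (Fin 2) ℂ} {n : ℕ} (hQ : Q.IsHomogeneous n)
    {A : SpecialLinearGroup (Fin 2) ℂ} (hA : subst (mat A) Q = Q) {t : ℂ}
    (ht : IsGenericFor A t) :
    eval ![1, t] Q = (A 0 0 + A 0 1 * t) ^ n * eval ![1, moebius t A] Q := by
  rw [← eval_mul_of_isHomogeneous hQ, moebius, mul_div_cancel₀ _ ht.1]
  conv_lhs => rw [← hA, eval_subst]
  simp [mat]

theorem eq_or_eq_neg_of_moebius_eq {A B : SpecialLinearGroup (Fin 2) ℂ} {t : ℂ}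
    (hA : IsGenericFor A t) (hB : IsGenericFor B t) (hBA : IsGenericFor (B⁻¹ * A) t)
    (h : moebius t A = moebius t B) : A = B ∨ A = -B := by
  rw [moebius, moebius, div_eq_div_iff hA.1 hB.1] at h
  have := hBA.2 (by
    simp [Matrix.SpecialLinearGroup.coe_mul, Matrix.SpecialLinearGroup.coe_inv,
      Matrix.adjugate_fin_two, Matrix.mul_apply, Fin.sum_univ_two]
    linear_combination h)
  refine this.imp (fun h => ?_) (fun h => ?_)
  · exact (inv_mul_eq_one.mp h).symm
  · rw [inv_mul_eq_iff_eq_mul] at h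
    simpa using h

theorem card_le_two_mul_card_image_moebius (G : Subgroup (SpecialLinearGroup (Fin 2) ℂ))
    [Fintype G] {t : ℂ} (ht : ∀ A ∈ G, IsGenericFor A t) :
    Fintype.card G ≤ 2 * (Finset.univ.image fun A : G => moebius t A).card := by
  refine Finset.card_le_mul_card_image Finset.univ 2 fun s hs => ?_
  obtain ⟨B, -, rfl⟩ := Finset.mem_image.mp hs
  rw [← Finset.card_map (Function.Embedding.subtype _)]
  refine (Finset.card_le_card (t := {(B : SpecialLinearGroup (Fin 2) ℂ), -(B : SpecialLinearGroup (Fin 2) ℂ)}) ?_).trans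
    Finset.card_le_two
  intro A hA
  simp at hA ⊢
  obtain ⟨hA, hAG⟩ := hA
  exact eq_or_eq_neg_of_moebius_eq (ht A hAG) (ht B B.2) (ht _ (G.mul_mem (G.inv_mem B.2) hAG)) hA

theorem disjoint_image_moebius {G : Subgroup (SpecialLinearGroup (Fin 2) ℂ)} [Fintype G]
    {P Q : MvPolynomial (Fin 2) ℂ} {n : ℕ} (hP : P.IsHomogeneous n) (hQ : Q.IsHomogeneous n)
    (hPG : ∀ A ∈ G, subst (mat A) P = P) (hQG : ∀ A ∈ G, subst (mat A) Q = Q) {t u : ℂ}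
    (ht : ∀ A ∈ G, IsGenericFor A t) (hu : ∀ A ∈ G, IsGenericFor A u)
    (hdet : eval ![1, t] P * eval ![1, u] Q - eval ![1, u] P * eval ![1, t] Q ≠ 0) :
    Disjoint (Finset.univ.image fun A : G => moebius t A)
      (Finset.univ.image fun A : G => moebius u A) := by
  rw [Finset.disjoint_left]
  intro s hs hs'
  obtain ⟨A, -, rfl⟩ := Finset.mem_image.mp hs
  obtain ⟨B, -, hB⟩ := Finset.mem_image.mp hs'
  apply hdet
  rw [eval_eq_moebius hP (hPG A A.2) (ht A A.2), eval_eq_moebius hQ (hQG A A.2) (ht A A.2),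
    eval_eq_moebius hP (hPG B B.2) (hu B B.2), eval_eq_moebius hQ (hQG B B.2) (hu B B.2), hB]
  ring

/-- An invariant form of degree less than `|G|` vanishing on two distinct generic orbits is zero. -/
theorem eq_zero_of_eval_eq_zero {G : Subgroup (SpecialLinearGroup (Fin 2) ℂ)} [Fintype G]
    {Q : MvPolynomial (Fin 2) ℂ} {n : ℕ} (hQ : Q.IsHomogeneous n) (hn : n < Fintype.card G)
    (hQG : ∀ A ∈ G, subst (mat A) Q = Q) {t u : ℂ}
    (ht : ∀ A ∈ G, IsGenericFor A t) (hu : ∀ A ∈ G, IsGenericFor A u)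
    (hdisj : Disjoint (Finset.univ.image fun A : G => moebius t A)
      (Finset.univ.image fun A : G => moebius u A))
    (hQt : eval ![1, t] Q = 0) (hQu : eval ![1, u] Q = 0) : Q = 0 := by
  have hzero : ∀ s, (∀ A ∈ G, IsGenericFor A s) → eval ![1, s] Q = 0 →
      ∀ A : G, eval ![1, moebius s A] Q = 0 := by
    intro s hs h0 A
    rw [eval_eq_moebius hQ (hQG A A.2) (hs A A.2)] at h0
    exact (mul_eq_zero.mp h0).resolve_left (pow_ne_zero _ (hs A A.2).1)
  refine eq_zero_of_card_zeros hQ ((Finset.univ.image fun A : G => moebius t A) ∪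
    Finset.univ.image fun A : G => moebius u A) (fun s hs => ?_) ?_
  · rcases Finset.mem_union.mp hs with hs | hs <;> obtain ⟨A, -, rfl⟩ := Finset.mem_image.mp hs
    exacts [hzero t ht hQt A, hzero u hu hQu A]
  · rw [Finset.card_union_of_disjoint hdisj]
    linarith [card_le_two_mul_card_image_moebius G ht, card_le_two_mul_card_image_moebius G hu]

theorem eventually_eval_F_ne_zero : ∀ᶠ t in Filter.cofinite, eval ![1, t] F ≠ 0 := by
  let q : Polynomial ℂ := Polynomial.X * (1 - 11 * Polynomial.X ^ 5 - Polynomial.X ^ 10)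
  have hq : q ≠ 0 := by
    intro h
    have := congrArg (Polynomial.eval 1) h
    norm_num [q] at this
  refine (eventually_eval_ne_zero hq).mono fun t h => ?_
  simpa [F, q] using h

theorem eventually_det_ne_zero {f : ℂ} (hf : f ≠ 0) (h : ℂ) :
    ∀ᶠ u in Filter.cofinite, f * eval ![1, u] (H ^ 3) - eval ![1, u] (F ^ 5) * h ≠ 0 := by
  let q : Polynomial ℂ :=
    Polynomial.C f * (1 + 228 * Polynomial.X ^ 5 + 494 * Polynomial.X ^ 10
      - 228 * Polynomial.X ^ 15 + Polynomial.X ^ 20) ^ 3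
    - (Polynomial.X * (1 - 11 * Polynomial.X ^ 5 - Polynomial.X ^ 10)) ^ 5 * Polynomial.C h
  have hq : q ≠ 0 := by
    intro h0
    have := congrArg (Polynomial.eval 0) h0
    simp [q] at this
    exact hf this
  refine (eventually_eval_ne_zero hq).mono fun u hu => ?_
  simpa [F, H, q] using hu

theorem exists_linear_combination {K : Type*} [Field K] {f g h k : K} (hdet : f * k - g * h ≠ 0)
    (p r : K) : ∃ a b : K, p = a * f + b * h ∧ r = a * g + b * k := by
  refine ⟨(p * k - r * h) / (f * k - g * h), (f * r - g * p) / (f * k - g * h), ?_, ?_⟩ <;>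
  · rw [div_mul_eq_mul_div, div_mul_eq_mul_div, ← add_div, eq_div_iff hdet]
    ring

/-- For any order-120 subgroup `G` of `SL(2,ℂ)` leaving `F` invariant (the binary
icosahedral group), every `G`-invariant homogeneous polynomial of degree 60 is a
`ℂ`-linear combination of `F^5` and `H^3`. -/
theorem degree_60_invariants_spanned_by_F5_H3
    (G : Subgroup (Matrix.SpecialLinearGroup (Fin 2) ℂ)) (hcard : Nat.card G = 120)
    (hF : ∀ A ∈ G, subst (mat A) F = F)
    (P : MvPolynomial (Fin 2) ℂ) (hdeg : P.IsHomogeneous 60)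
    (hP : ∀ A ∈ G, subst (mat A) P = P) :
    ∃ a b : ℂ, P = C a * F ^ 5 + C b * H ^ 3 := by
  have hfin : Finite G := Nat.finite_of_card_ne_zero (by omega)
  have := Fintype.ofFinite G
  rw [Nat.card_eq_fintype_card] at hcard
  have hgen : ∀ᶠ t in Filter.cofinite, ∀ A ∈ G, IsGenericFor A t := by
    simpa using Filter.eventually_all.mpr fun A : G => eventually_isGenericFor (A : _)
  obtain ⟨t, ht, hFt⟩ := (hgen.and eventually_eval_F_ne_zero).exists
  have hFt' : eval ![1, t] (F ^ 5) ≠ 0 := by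
    rw [map_pow]
    exact pow_ne_zero 5 hFt
  obtain ⟨u, hu, hdet⟩ := (hgen.and (eventually_det_ne_zero hFt' (eval ![1, t] (H ^ 3)))).exists
  obtain ⟨a, b, hat, hau⟩ := exists_linear_combination hdet (eval ![1, t] P) (eval ![1, u] P)
  have hF60 : (F ^ 5).IsHomogeneous 60 := isHomogeneous_F.pow 5
  have hH60 : (H ^ 3).IsHomogeneous 60 := isHomogeneous_H.pow 3
  have hF5 : ∀ A ∈ G, subst (mat A) (F ^ 5) = F ^ 5 := fun A hA => by
    rw [subst_pow, hF A hA]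
  have hH3 : ∀ A ∈ G, subst (mat A) (H ^ 3) = H ^ 3 := fun A hA => by
    rw [subst_pow, subst_H (A := mat A) A.2 (hF A hA)]
  refine ⟨a, b, sub_eq_zero.mp (eq_zero_of_eval_eq_zero
    (hdeg.sub ((hF60.C_mul a).add (hH60.C_mul b))) (by rw [hcard]; norm_num) (fun A hA => ?_) ht hu
    (disjoint_image_moebius hF60 hH60 hF5 hH3 ht hu hdet) ?_ ?_)⟩
  · rw [subst_sub_linear, hP A hA, hF5 A hA, hH3 A hA]
  · rw [map_sub, map_add, map_mul, map_mul, eval_C, eval_C, hat, sub_self]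
  · rw [map_sub, map_add, map_mul, map_mul, eval_C, eval_C, hau, sub_self]
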